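/- arXiv:2206.11001 — 2 statements merged into one kernel-verified Lean document; each statement's English description precedes it below -/
import Mathlib

section
/- Let A be a connected order and G a finite abelian group. Then the map μ(A) × G → μ(A[G]) sending (ζ, g) to the element ζ·g of the group ring A[G] is a group isomorphism onto the group of roots of unity of A[G]. -/
/-- A commutative ring is connected if it is non-zero and `0`, `1` are its only idempotents. -/
def IsConnectedRing (R : Type*) [CommRing R] : Prop :=
  Nontrivial R ∧ ∀ e : R, IsIdempotentElem e → e = 0 ∨ e = 1

/-!
Let `u` be a unit of finite order of `A[G]`, and `σ : A → ℂ` a ring homomorphism. The image `w` of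
`u u*` in `ℂ[G]` is self-adjoint of finite order, with coefficient `∑ |σ(u_g)|²` at `1`. That
coefficient is at most `1`: squaring a self-adjoint element at least squares the size of its
coefficient at `1`, while `w` has only finitely many powers. Hence `|σ(u_g u_h)| ≤ 1/2` for
`g ≠ h`. By Kronecker's theorem an integral element all of whose conjugates have absolute value
less than `1` is nilpotent, so modulo the nilradical the coefficients of `u` are orthogonal, and
only one of them survives as `A` is connected. Thus `u` is a monomial times a unipotent element of
finite order, and the latter is `1` since `A[G]` has no additive torsion.
-/

open MonoidAlgebra

section Involution

variable {R G : Type*} [CommSemiring R] [StarRing R] [CommGroup G]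

variable (R G) in
/-- The involution `∑ a_g g ↦ ∑ a_g^* g⁻¹` of the group ring of a commutative group, playing the
role of the adjoint; commutativity makes it a ring homomorphism. -/
noncomputable def groupRingAdjoint : MonoidAlgebra R G →+* MonoidAlgebra R G :=
  (mapDomainRingHom R (invMonoidHom : G →* G)).comp (mapRingHom G (starRingEnd R))

lemma coeff_groupRingAdjoint (x : MonoidAlgebra R G) (g : G) :
    (groupRingAdjoint R G x).coeff g = starRingEnd R (x.coeff g⁻¹) := by
  induction x using MonoidAlgebra.induction_linear with
  | zero => simp
  | add x y hx hy => simp [hx, hy]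
  | single a b =>
    classical
    simp [groupRingAdjoint, Finsupp.single_apply, inv_eq_iff_eq_inv, apply_ite (starRingEnd R)]

lemma groupRingAdjoint_groupRingAdjoint (x : MonoidAlgebra R G) :
    groupRingAdjoint R G (groupRingAdjoint R G x) = x := by
  ext g
  simp [coeff_groupRingAdjoint]

lemma coeff_one_mul_groupRingAdjoint (x : MonoidAlgebra R G) :
    (x * groupRingAdjoint R G x).coeff 1 = x.coeff.sum fun _ a ↦ a * starRingEnd R a := by
  simp [coeff_mul_apply_left, coeff_groupRingAdjoint, Finsupp.sum]

end Involution

section ComplexGroupRing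

variable {G : Type*} [CommGroup G]

lemma sum_sq_norm_coeff_le_norm_coeff_one (x : MonoidAlgebra ℂ G) (s : Finset G) :
    ∑ g ∈ s, ‖x.coeff g‖ ^ 2 ≤ ‖(x * groupRingAdjoint ℂ G x).coeff 1‖ := by
  have hcoeff : (x * groupRingAdjoint ℂ G x).coeff 1 =
      ((∑ g ∈ x.coeff.support, ‖x.coeff g‖ ^ 2 : ℝ) : ℂ) := by
    simp [coeff_one_mul_groupRingAdjoint, Finsupp.sum, Complex.mul_conj']
  rw [hcoeff, Complex.norm_real, Real.norm_of_nonneg (by positivity)]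
  classical
  have hsupp : ∀ g ∈ s, g ∉ s ∩ x.coeff.support → ‖x.coeff g‖ ^ 2 = 0 := by simp_all
  rw [← Finset.sum_subset Finset.inter_subset_left hsupp]
  exact Finset.sum_le_sum_of_subset_of_nonneg Finset.inter_subset_right fun _ _ _ ↦ by positivity

lemma norm_coeff_one_pow_le_of_selfAdjoint {w : MonoidAlgebra ℂ G}
    (hw : groupRingAdjoint ℂ G w = w) (k : ℕ) :
    ‖w.coeff 1‖ ^ 2 ^ k ≤ ‖(w ^ 2 ^ k).coeff 1‖ := by
  induction k with
  | zero => simp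
  | succ k ih =>
    have hpow : groupRingAdjoint ℂ G (w ^ 2 ^ k) = w ^ 2 ^ k := by rw [map_pow, hw]
    calc ‖w.coeff 1‖ ^ 2 ^ (k + 1) = (‖w.coeff 1‖ ^ 2 ^ k) ^ 2 := by rw [pow_succ, pow_mul]
      _ ≤ ‖(w ^ 2 ^ k).coeff 1‖ ^ 2 := by gcongr
      _ ≤ ‖(w ^ 2 ^ k * groupRingAdjoint ℂ G (w ^ 2 ^ k)).coeff 1‖ := by
        have hsum := sum_sq_norm_coeff_le_norm_coeff_one (w ^ 2 ^ k) {1}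
        rwa [Finset.sum_singleton] at hsum
      _ = ‖(w ^ 2 ^ (k + 1)).coeff 1‖ := by rw [hpow, pow_succ 2 k, pow_mul, sq]

lemma norm_coeff_one_le_one_of_selfAdjoint {w : MonoidAlgebra ℂ G}
    (hw : groupRingAdjoint ℂ G w = w) (hfin : IsOfFinOrder w) : ‖w.coeff 1‖ ≤ 1 := by
  by_contra! hlt
  obtain ⟨B, hB⟩ := (hfin.finite_powers.image fun y ↦ ‖y.coeff 1‖).bddAbove
  obtain ⟨k, hk⟩ := pow_unbounded_of_one_lt B hlt
  have hle : ‖w.coeff 1‖ ^ 2 ^ k ≤ B :=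
    (norm_coeff_one_pow_le_of_selfAdjoint hw k).trans
      (hB (Set.mem_image_of_mem _ (Submonoid.pow_mem _ (Submonoid.mem_powers w) _)))
  have hmono : ‖w.coeff 1‖ ^ k ≤ ‖w.coeff 1‖ ^ 2 ^ k :=
    pow_le_pow_right₀ hlt.le Nat.lt_two_pow_self.le
  linarith

lemma sum_sq_norm_coeff_le_one {v : MonoidAlgebra ℂ G} (hv : IsOfFinOrder v) (s : Finset G) :
    ∑ g ∈ s, ‖v.coeff g‖ ^ 2 ≤ 1 := by
  refine (sum_sq_norm_coeff_le_norm_coeff_one v s).trans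
    (norm_coeff_one_le_one_of_selfAdjoint ?_ ?_)
  · rw [map_mul, groupRingAdjoint_groupRingAdjoint, mul_comm]
  · exact hv.mul ((groupRingAdjoint ℂ G).toMonoidHom.isOfFinOrder hv)

lemma norm_coeff_mul_coeff_le_half {v : MonoidAlgebra ℂ G} (hv : IsOfFinOrder v) {g h : G}
    (hgh : g ≠ h) : ‖v.coeff g * v.coeff h‖ ≤ 1 / 2 := by
  classical
  have hsum := sum_sq_norm_coeff_le_one hv {g, h}
  rw [Finset.sum_pair hgh] at hsum
  rw [norm_mul]
  linarith [two_mul_le_add_sq ‖v.coeff g‖ ‖v.coeff h‖]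

end ComplexGroupRing

section Conjugates

open Polynomial in
lemma mahlerMeasure_minpoly_eq_one_of_forall_norm_le_one {K : Type*} [Field K] [CharZero K]
    [Algebra.IsAlgebraic ℚ K] {x : K} (hx : IsIntegral ℤ x) (hle : ∀ σ : K →+* ℂ, ‖σ x‖ ≤ 1) :
    ((minpoly ℤ x).map (Int.castRingHom ℂ)).mahlerMeasure = 1 := by
  have hmonic : ((minpoly ℤ x).map (Int.castRingHom ℂ)).Monic := (minpoly.monic hx).map _
  have hmap : (minpoly ℚ x).map (algebraMap ℚ ℂ) = (minpoly ℤ x).map (Int.castRingHom ℂ) := by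
    rw [minpoly.isIntegrallyClosed_eq_field_fractions' ℚ hx, Polynomial.map_map]
    congr 1
  have hroots : ∀ z ∈ ((minpoly ℤ x).map (Int.castRingHom ℂ)).roots, max 1 ‖z‖ = 1 :=
    fun z hz ↦ by
      have hz' : z ∈ (minpoly ℚ x).rootSet ℂ := by
        rw [mem_rootSet']
        rwa [mem_roots', IsRoot.def, ← hmap, eval_map_algebraMap] at hz
      rw [← Algebra.IsAlgebraic.range_eval_eq_rootSet_minpoly] at hz'
      obtain ⟨σ, rfl⟩ := hz'
      exact max_eq_left (hle σ)
  rw [mahlerMeasure_eq_leadingCoeff_mul_prod_roots, hmonic.leadingCoeff, norm_one, one_mul,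
    Multiset.map_congr rfl hroots, Multiset.map_const', Multiset.prod_replicate, one_pow]

lemma eq_zero_of_isIntegral_of_forall_norm_lt_one {K : Type*} [Field K] [CharZero K]
    [Algebra.IsAlgebraic ℚ K] {x : K} (hx : IsIntegral ℤ x) (hlt : ∀ σ : K →+* ℂ, ‖σ x‖ < 1) :
    x = 0 := by
  by_contra hx0
  let σ : K →+* ℂ := (IsAlgClosed.lift (R := ℚ) : K →ₐ[ℚ] ℂ).toRingHom
  have hroot : σ x ∈ (minpoly ℤ x).aroots ℂ := by
    rw [Polynomial.mem_aroots]
    refine ⟨minpoly.ne_zero hx, ?_⟩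
    have haeval := Polynomial.map_aeval_eq_aeval_map (φ := RingHom.id ℤ) (ψ := σ)
      (RingHom.ext_int _ _) (minpoly ℤ x) x
    simpa using haeval.symm
  obtain ⟨n, hn, hpow⟩ := Polynomial.pow_eq_one_of_mahlerMeasure_eq_one
    (mahlerMeasure_minpoly_eq_one_of_forall_norm_le_one hx fun σ ↦ (hlt σ).le)
    ((map_ne_zero σ).2 hx0) hroot
  exact (hlt σ).ne (Complex.norm_eq_one_of_pow_eq_one hpow hn.ne')

lemma eq_zero_of_forall_norm_algebraMap_lt_one {D K : Type*} [CommRing D] [IsDomain D] [CharZero D]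
    [Algebra.IsIntegral ℤ D] [Field K] [Algebra D K] [IsFractionRing D K] {x : D}
    (hlt : ∀ σ : K →+* ℂ, ‖σ (algebraMap D K x)‖ < 1) : x = 0 := by
  have : CharZero K := charZero_of_injective_algebraMap (IsFractionRing.injective D K)
  have : Algebra.IsAlgebraic ℤ K := (IsFractionRing.isAlgebraic_iff' ℤ D K).1 inferInstance
  have : Algebra.IsAlgebraic ℚ K :=
    (IsFractionRing.comap_isAlgebraic_iff (A := ℤ) (K := ℚ) (C := K)).1 this
  have hx : IsIntegral ℤ (algebraMap D K x) :=
    (Algebra.IsIntegral.isIntegral (R := ℤ) x).map (algebraMap D K).toIntAlgHom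
  exact (map_eq_zero_iff _ (IsFractionRing.injective D K)).1
    (eq_zero_of_isIntegral_of_forall_norm_lt_one hx hlt)

lemma map_eq_zero_of_forall_norm_lt_one {A D : Type*} [CommRing A] [Algebra.IsIntegral ℤ A]
    [CommRing D] [IsDomain D] [CharZero D] {f : A →+* D} (hf : Function.Surjective f) {x : A}
    (hlt : ∀ σ : A →+* ℂ, ‖σ x‖ < 1) : f x = 0 := by
  have : Algebra.IsIntegral ℤ D := .of_surjective f.toIntAlgHom hf
  exact eq_zero_of_forall_norm_algebraMap_lt_one (K := FractionRing D)
    fun σ ↦ hlt ((σ.comp (algebraMap D (FractionRing D))).comp f)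

lemma natCast_mem_nonZeroDivisors {R : Type*} [CommSemiring R] [IsAddTorsionFree R] {n : ℕ}
    (hn : n ≠ 0) : (n : R) ∈ nonZeroDivisors R := by
  rw [mem_nonZeroDivisors_iff_right]
  intro a ha
  rwa [← nsmul_eq_mul', nsmul_eq_zero_iff_right hn] at ha

variable {A : Type*} [CommRing A] [IsAddTorsionFree A]

lemma charZero_quotient_of_mem_minimalPrimes {p : Ideal A} (hp : p ∈ minimalPrimes A) :
    CharZero (A ⧸ p) := by
  refine charZero_of_inj_zero fun n hn ↦ ?_
  by_contra hn0
  have hmem : (n : A) ∈ p := Ideal.Quotient.eq_zero_iff_mem.1 (by simpa using hn)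
  exact notMem_nonZeroDivisors_of_mem_mem_minimalPrimes hmem hp (natCast_mem_nonZeroDivisors hn0)

lemma isNilpotent_of_forall_norm_lt_one [Algebra.IsIntegral ℤ A] {x : A}
    (hlt : ∀ σ : A →+* ℂ, ‖σ x‖ < 1) : IsNilpotent x := by
  rw [← mem_nilradical, nilradical, ← Ideal.sInf_minimalPrimes, Submodule.mem_sInf]
  intro (p : Ideal A) hp
  have : p.IsPrime := hp.1.1
  have : CharZero (A ⧸ p) := charZero_quotient_of_mem_minimalPrimes hp
  exact Ideal.Quotient.eq_zero_iff_mem.1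
    (map_eq_zero_of_forall_norm_lt_one Ideal.Quotient.mk_surjective hlt)

end Conjugates

section Unipotent

variable {R : Type*} [CommRing R]

lemma add_mem_nonZeroDivisors_of_isNilpotent {a y : R} (ha : a ∈ nonZeroDivisors R)
    (hy : IsNilpotent y) : a + y ∈ nonZeroDivisors R := by
  obtain ⟨k, hk⟩ := hy
  have hdvd : a + y ∣ a ^ k := by
    simpa [neg_pow y k, hk] using sub_dvd_pow_sub_pow a (-y) k
  obtain ⟨b, hb⟩ := hdvd
  exact (mul_mem_nonZeroDivisors.1 (hb ▸ pow_mem ha k)).1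

lemma eq_one_of_isOfFinOrder_of_isNilpotent_sub_one [IsAddTorsionFree R] {v : R}
    (hv : IsOfFinOrder v) (hnil : IsNilpotent (v - 1)) : v = 1 := by
  obtain ⟨n, hn, hvn⟩ := isOfFinOrder_iff_pow_eq_one.1 hv
  have hgeom : (∑ i ∈ Finset.range n, v ^ i) * (v - 1) = 0 := by
    rw [geom_sum_mul, hvn, sub_self]
  have hsub : IsNilpotent (∑ i ∈ Finset.range n, (v ^ i - 1)) :=
    isNilpotent_sum fun i _ ↦ by
      obtain ⟨c, hc⟩ := sub_one_dvd_pow_sub_one v i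
      exact hc ▸ (Commute.all _ _).isNilpotent_mul_right hnil
  have hreg : ∑ i ∈ Finset.range n, v ^ i ∈ nonZeroDivisors R := by
    simpa [Finset.sum_sub_distrib] using
      add_mem_nonZeroDivisors_of_isNilpotent (natCast_mem_nonZeroDivisors hn.ne') hsub
  exact sub_eq_zero.1 ((mul_left_mem_nonZeroDivisors_eq_zero_iff hreg).1 hgeom)

end Unipotent

section Connected

variable {R : Type*} [CommRing R]

lemma IsConnectedRing.quotient_nilradical (hR : IsConnectedRing R) :
    IsConnectedRing (R ⧸ nilradical R) := by
  have := hR.1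
  refine ⟨Ideal.Quotient.nontrivial_iff.2 fun htop ↦ ?_, fun e he ↦ ?_⟩
  · have h1 : (1 : R) ∈ nilradical R := htop ▸ Submodule.mem_top
    exact not_isNilpotent_one h1
  · obtain ⟨e', he', rfl⟩ := exists_isIdempotentElem_eq_of_ker_isNilpotent
      (Ideal.Quotient.mk (nilradical R)) (fun x hx ↦ by rwa [Ideal.mk_ker] at hx) e
      (Ideal.Quotient.mk_surjective e) he
    rcases hR.2 e' he' with rfl | rfl
    · exact .inl (map_zero _)
    · exact .inr (map_one _)

lemma IsConnectedRing.exists_forall_ne_eq_zero (hR : IsConnectedRing R) {ι : Type*}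
    {s : Finset ι} {c : ι → R} (hunit : IsUnit (∑ i ∈ s, c i))
    (horth : Pairwise fun i j ↦ c i * c j = 0) : ∃ i, ∀ j ≠ i, c j = 0 := by
  have := hR.1
  obtain ⟨t, ht⟩ := hunit.exists_left_inv
  have hidem : ∀ i ∈ s, IsIdempotentElem (t * c i) := fun i hi ↦ by
    have hsum : c i * ∑ j ∈ s, c j = c i * c i := by
      rw [Finset.mul_sum, Finset.sum_eq_single_of_mem i hi fun j _ hji ↦ horth hji.symm]
    calc t * c i * (t * c i) = t * (t * (c i * c i)) := by ring
      _ = t * c i * (t * ∑ j ∈ s, c j) := by rw [← hsum]; ring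
      _ = t * c i := by rw [ht, mul_one]
  obtain ⟨i, hi, hne⟩ : ∃ i ∈ s, t * c i ≠ 0 := by
    by_contra! hzero
    rw [Finset.mul_sum, Finset.sum_eq_zero hzero] at ht
    exact zero_ne_one ht
  have hone : t * c i = 1 := (hR.2 _ (hidem i hi)).resolve_left hne
  refine ⟨i, fun j hj ↦ ?_⟩
  calc c j = t * (c j * c i) := by linear_combination -(c j) * hone
    _ = 0 := by rw [horth hj, mul_zero]

end Connected

section Augmentation

variable {R S M : Type*} [CommSemiring R] [CommSemiring S] [Monoid M]

variable (R M) in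
/-- The augmentation `∑ a_g g ↦ ∑ a_g` of the monoid ring `R[M]`. -/
noncomputable def augmentation : MonoidAlgebra R M →+* R :=
  (MonoidAlgebra.lift R R M 1).toRingHom

lemma augmentation_apply (u : MonoidAlgebra R M) :
    augmentation R M u = ∑ g ∈ u.coeff.support, u.coeff g := by
  simp [augmentation, MonoidAlgebra.lift_apply, Finsupp.sum]

lemma augmentation_single (g : M) (a : R) : augmentation R M (single g a) = a := by
  simp [augmentation]

lemma augmentation_mapRingHom (f : R →+* S) (u : MonoidAlgebra R M) :
    augmentation S M (mapRingHom M f u) = f (augmentation R M u) := by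
  induction u using MonoidAlgebra.induction_linear with
  | zero => simp
  | add x y hx hy => simp only [map_add, hx, hy]
  | single g a => simp [augmentation_single]

lemma IsConnectedRing.exists_eq_single {R : Type*} [CommRing R] (hR : IsConnectedRing R)
    {u : MonoidAlgebra R M} (hunit : IsUnit (augmentation R M u))
    (horth : Pairwise fun g h ↦ u.coeff g * u.coeff h = 0) :
    ∃ g, u = single g (augmentation R M u) := by
  rw [augmentation_apply] at hunit
  obtain ⟨g, hg⟩ := hR.exists_forall_ne_eq_zero hunit horth
  have hu : u = single g (u.coeff g) := by
    ext h
    by_cases hh : h = g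
    · simp [hh]
    · rw [hg h hh, coeff_single, Finsupp.single_eq_of_ne hh]
  refine ⟨g, ?_⟩
  conv_rhs => rw [hu, augmentation_single]
  exact hu

end Augmentation

section Nilpotent

variable {R M : Type*} [CommRing R] [CommMonoid M]

lemma isNilpotent_of_forall_isNilpotent_coeff {x : MonoidAlgebra R M}
    (hx : ∀ g, IsNilpotent (x.coeff g)) : IsNilpotent x := by
  rw [← sum_coeff_single x]
  refine isNilpotent_sum fun g _ ↦ ?_
  obtain ⟨n, hn⟩ := hx g
  exact ⟨n, by rw [single_pow, hn, single_zero]⟩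

lemma isNilpotent_of_mapRingHom_quotient_nilradical_eq_zero {x : MonoidAlgebra R M}
    (hx : mapRingHom M (Ideal.Quotient.mk (nilradical R)) x = 0) : IsNilpotent x := by
  refine isNilpotent_of_forall_isNilpotent_coeff fun g ↦ ?_
  rw [← mem_nilradical, ← Ideal.Quotient.eq_zero_iff_mem, ← coeff_mapRingHom, hx]
  rfl

lemma isAddTorsionFree_monoidAlgebra (R M : Type*) [Semiring R] [IsAddTorsionFree R] :
    IsAddTorsionFree (MonoidAlgebra R M) :=
  coeff_injective.isAddTorsionFree (coeffAddEquiv : MonoidAlgebra R M ≃+ _).toAddMonoidHom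

lemma units_eq_one_of_map_quotient_nilradical_eq_one [IsAddTorsionFree R] {v : (MonoidAlgebra R M)ˣ}
    (hv : IsOfFinOrder v)
    (hmap : Units.map (mapRingHom M (Ideal.Quotient.mk (nilradical R))).toMonoidHom v = 1) :
    v = 1 := by
  have := isAddTorsionFree_monoidAlgebra R M
  refine Units.ext (eq_one_of_isOfFinOrder_of_isNilpotent_sub_one (Units.isOfFinOrder_val.2 hv)
    (isNilpotent_of_mapRingHom_quotient_nilradical_eq_zero ?_))
  rw [map_sub, map_one, sub_eq_zero]
  exact congrArg Units.val hmap

end Nilpotent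

section Monomial

variable {A B G : Type*} [CommSemiring A] [CommSemiring B] [CommGroup G]

variable (A G) in
/-- The homomorphism `(a, g) ↦ a g` from `Aˣ × G` to the unit group of the group ring. -/
noncomputable def monomialUnit : Aˣ × G →* (MonoidAlgebra A G)ˣ :=
  (Units.map singleHom).comp
    (MulEquiv.prodUnits.symm.toMonoidHom.comp ((MonoidHom.id Aˣ).prodMap toUnits.toMonoidHom))

lemma val_monomialUnit (a : Aˣ) (g : G) :
    (monomialUnit A G (a, g) : MonoidAlgebra A G) = single g (a : A) := rfl

lemma map_monomialUnit (f : A →+* B) (a : Aˣ) (g : G) :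
    Units.map (mapRingHom G f).toMonoidHom (monomialUnit A G (a, g)) =
      monomialUnit B G (Units.map f.toMonoidHom a, g) :=
  Units.ext (by simp [val_monomialUnit])

lemma monomialUnit_injective [Nontrivial A] : Function.Injective (monomialUnit A G) := by
  rintro ⟨a, g⟩ ⟨b, h⟩ heq
  have hsingle : single g (a : A) = single h (b : A) := by
    rw [← val_monomialUnit, heq, val_monomialUnit]
  have hcoeff := congrArg coeff hsingle
  simp only [coeff_single, Finsupp.single_eq_single_iff] at hcoeff
  simpa [Units.ext_iff, and_comm] using hcoeff

end Monomial

section RootsOfUnity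

variable {A G : Type*} [CommRing A] [IsAddTorsionFree A] [Algebra.IsIntegral ℤ A] [CommGroup G]

lemma isNilpotent_coeff_mul_coeff {u : MonoidAlgebra A G} (hu : IsOfFinOrder u) {g h : G}
    (hgh : g ≠ h) : IsNilpotent (u.coeff g * u.coeff h) := by
  refine isNilpotent_of_forall_norm_lt_one fun σ ↦ ?_
  have hσu : IsOfFinOrder (mapRingHom G σ u) := (mapRingHom G σ).toMonoidHom.isOfFinOrder hu
  have hle := norm_coeff_mul_coeff_le_half hσu hgh
  rw [coeff_mapRingHom, coeff_mapRingHom, ← map_mul] at hle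
  exact hle.trans_lt (by norm_num)

lemma exists_units_map_eq_monomialUnit (hA : IsConnectedRing A) {u : (MonoidAlgebra A G)ˣ}
    (hu : IsOfFinOrder u) :
    ∃ g, Units.map (mapRingHom G (Ideal.Quotient.mk (nilradical A))).toMonoidHom u =
      monomialUnit (A ⧸ nilradical A) G (Units.map (Ideal.Quotient.mk (nilradical A)).toMonoidHom
        (Units.map (augmentation A G).toMonoidHom u), g) := by
  set q := Ideal.Quotient.mk (nilradical A)
  have horth : Pairwise fun g h ↦
      (mapRingHom G q u).coeff g * (mapRingHom G q u).coeff h = 0 := fun g h hgh ↦ by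
    beta_reduce
    have hnil := isNilpotent_coeff_mul_coeff (Units.isOfFinOrder_val.2 hu) hgh
    rw [coeff_mapRingHom, coeff_mapRingHom, ← map_mul]
    exact Ideal.Quotient.eq_zero_iff_mem.2 (mem_nilradical.2 hnil)
  obtain ⟨g, hg⟩ := hA.quotient_nilradical.exists_eq_single
    ((u.isUnit.map (mapRingHom G q)).map (augmentation _ G)) horth
  refine ⟨g, Units.ext ?_⟩
  rw [augmentation_mapRingHom] at hg
  exact hg

lemma torsion_units_le_range_monomialUnit (hA : IsConnectedRing A) :
    CommGroup.torsion (MonoidAlgebra A G)ˣ ≤ (monomialUnit A G).range := by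
  intro u hu
  rw [CommGroup.mem_torsion] at hu
  have := hA.quotient_nilradical.1
  obtain ⟨g, hg⟩ := exists_units_map_eq_monomialUnit hA hu
  set z := Units.map (augmentation A G).toMonoidHom u
  have hzfin : IsOfFinOrder z := MonoidHom.isOfFinOrder _ hu
  have hgfin : IsOfFinOrder g := by
    have himage := MonoidHom.isOfFinOrder
      (Units.map (mapRingHom G (Ideal.Quotient.mk (nilradical A))).toMonoidHom) hu
    rw [hg, monomialUnit_injective.isOfFinOrder_iff] at himage
    exact himage.snd
  have hm : IsOfFinOrder (monomialUnit A G (z, g)) :=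
    MonoidHom.isOfFinOrder _ (hzfin.prod_mk hgfin)
  have hdiv : u * (monomialUnit A G (z, g))⁻¹ = 1 := by
    refine units_eq_one_of_map_quotient_nilradical_eq_one (hu.mul hm.inv) ?_
    rw [map_mul, map_inv, hg, map_monomialUnit, mul_inv_cancel]
  exact ⟨(z, g), (mul_inv_eq_one.1 hdiv).symm⟩

lemma map_torsion_monomialUnit (hA : IsConnectedRing A) :
    (CommGroup.torsion (Aˣ × G)).map (monomialUnit A G) =
      CommGroup.torsion (MonoidAlgebra A G)ˣ := by
  have := hA.1
  rw [← CommGroup.comap_torsion_of_injective monomialUnit_injective,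
    Subgroup.map_comap_eq_self (torsion_units_le_range_monomialUnit hA)]

theorem rootsOfUnity_groupring_general (hconn : IsConnectedRing A) :
    ∃ e : (CommGroup.torsion Aˣ × CommGroup.torsion G) ≃* CommGroup.torsion (MonoidAlgebra A G)ˣ,
      ∀ (ζ : CommGroup.torsion Aˣ) (g : CommGroup.torsion G),
        ((e (ζ, g) : (MonoidAlgebra A G)ˣ) : MonoidAlgebra A G) =
          single (g : G) ((ζ : Aˣ) : A) := by
  have := hconn.1
  let e₁ := (Subgroup.prodEquiv (CommGroup.torsion Aˣ) (CommGroup.torsion G)).symm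
  let e₂ := MulEquiv.subgroupCongr (CommGroup.torsion_prod (G := Aˣ) (H := G)).symm
  let e₃ := (CommGroup.torsion (Aˣ × G)).equivMapOfInjective _ (monomialUnit_injective (A := A))
  let e₄ := MulEquiv.subgroupCongr (map_torsion_monomialUnit (G := G) hconn)
  exact ⟨e₁.trans (e₂.trans (e₃.trans e₄)), fun _ _ ↦ rfl⟩

end RootsOfUnity

/-- Let `A` be a connected order and `G` a finite abelian group. Then the
map `μ(A) × G → μ(A[G])`, `(ζ, g) ↦ ζ·g`, is a group isomorphism onto the group of roots of
unity of the group ring `A[G]`. -/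
theorem rootsOfUnity_groupring
    {A : Type u} [CommRing A] [Module.Free ℤ A] [Module.Finite ℤ A]
    (hconn : IsConnectedRing A)
    {G : Type v} [CommGroup G] [Finite G] :
    ∃ e : (CommGroup.torsion Aˣ × G) ≃* CommGroup.torsion (MonoidAlgebra A G)ˣ,
      ∀ (ζ : CommGroup.torsion Aˣ) (g : G),
        ((e (ζ, g) : (MonoidAlgebra A G)ˣ) : MonoidAlgebra A G) =
          MonoidAlgebra.single g ((ζ : Aˣ) : A) := by
  have : IsAddTorsionFree A := Module.isTorsionFree_int_iff_isAddTorsionFree.1 inferInstance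
  obtain ⟨e, he⟩ := rootsOfUnity_groupring_general hconn (G := G)
  let torsionEquiv : CommGroup.torsion G ≃* G := isMulTorsion_of_finite.torsionMulEquiv
  exact ⟨((MulEquiv.refl _).prodCongr torsionEquiv.symm).trans e, fun ζ g ↦ he ζ _⟩
end

section
/- Let R be a connected reduced order and let (Γ, (R_γ)_{γ∈Γ}) be a universal grading of R. Then the groups μ(R) and Γ are finite, every root of unity of R lies in R_γ for a unique γ ∈ Γ, and the map d: μ(R) → Γ sending each root of unity ζ to the unique γ with ζ ∈ R_γ is a group homomorphism. -/
/-- A grading of a commutative ring `R` by a (multiplicatively written) abelian group `Δ`: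
a `Δ`-indexed internal direct sum decomposition of `R` into additive subgroups such that
`R_γ · R_δ ⊆ R_{γδ}`. -/
structure Grading (R : Type u) [CommRing R] (Δ : Type v) [CommGroup Δ] where
  comp : Δ → AddSubgroup R
  mul_mem : ∀ ⦃γ δ : Δ⦄ ⦃x y : R⦄, x ∈ comp γ → y ∈ comp δ → x * y ∈ comp (γ * δ)
  isInternal : letI := Classical.decEq Δ; DirectSum.IsInternal comp

/-- A grading is universal if every grading of `R` is obtained from it by pushforward
(`S_ε = Σ_{δ ∈ f⁻¹(ε)} R_δ`) along a unique group homomorphism. -/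
def Grading.IsUniversal {R : Type u} [CommRing R] {Δ : Type v} [CommGroup Δ]
    (g : Grading R Δ) : Prop :=
  ∀ (E : Type v) (_ : CommGroup E) (s : Grading R E),
    ∃! f : Δ →* E, ∀ ε : E, s.comp ε = ⨆ δ ∈ f ⁻¹' {ε}, g.comp δ

/-!
The ring homomorphisms `σ : R → ℂ` define the positive definite Hermitian form
`⟨x, y⟩ = ∑ σ, σ x * conj (σ y)` on `R`, for which roots of unity act as isometries. Twisting `σ`
by the characters of a finite grading group permutes the summands, so distinct homogeneous
components are orthogonal.

The form detects idempotents: if `x + y = 1` and `⟨x, y⟩ = 0`, then `x * y = 0`. Indeed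
`|σ x|² + |σ y|² + 2 Re (σ x * conj (σ y)) = 1`, so if `x * y ≠ 0`, then the arithmetic-geometric
mean inequality and the fact that the nonzero conjugates of `x * y` have product of absolute value
at least `1` make `Re ⟨x, y⟩` strictly negative.

Hence, for a root of unity `u` with component `u_γ` of degree `γ`, orthogonality of `u_γ` and
`u - u_γ` makes `u⁻¹ * u_γ` idempotent. As `R` is connected, `u = u_γ` whenever `u_γ ≠ 0`. Roots of
unity are finite in number because they are distinct modulo `3`.
-/

section ComplexEmbeddings

open ComplexConjugate

variable {R : Type*} [CommRing R]

theorem exists_intCast_eq_prod_filter_ne_zero [Algebra.IsIntegral ℤ R] {K : Type*} [Field K]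
    [Algebra ℚ K] [IsGalois ℚ K] [DecidableEq K] [Fintype (R →ₐ[ℤ] K)] (z : R) :
    ∃ m : ℤ, ∏ σ : R →ₐ[ℤ] K with σ z ≠ 0, σ z = m := by
  set N : K := ∏ σ : R →ₐ[ℤ] K with σ z ≠ 0, σ z with hN
  have integral_N : IsIntegral ℤ N :=
    IsIntegral.prod _ fun σ _ => (Algebra.IsIntegral.isIntegral z).map σ
  have galois_N (τ : Gal(K/ℚ)) : τ N = N := by
    let e : (R →ₐ[ℤ] K) ≃ (R →ₐ[ℤ] K) := AlgEquiv.arrowCongr .refl (τ.restrictScalars ℤ)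
    rw [hN, map_prod]
    exact Finset.prod_equiv e (by simp [e]) (by simp [e])
  obtain ⟨q, hq⟩ := (InfiniteGalois.mem_range_algebraMap_iff_fixed N).2 galois_N
  rw [← hq, isIntegral_algebraMap_iff (algebraMap ℚ K).injective] at integral_N
  obtain ⟨m, hm⟩ := IsIntegrallyClosed.isIntegral_iff.1 integral_N
  exact ⟨m, by simp [← hq, ← hm]⟩

theorem bijective_comp_val_algebraicClosure [Algebra.IsIntegral ℤ R] (F E : Type*) [Field F]
    [Field E] [Algebra F E] :
    Function.Bijective
      (((algebraicClosure F E).val.restrictScalars ℤ).comp :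
        (R →ₐ[ℤ] algebraicClosure F E) → (R →ₐ[ℤ] E)) := by
  refine ⟨fun σ τ h => AlgHom.ext fun x => Subtype.ext (DFunLike.congr_fun h x), fun σ => ?_⟩
  have algebraic (x : R) : σ x ∈ algebraicClosure F E := mem_algebraicClosure_iff'.2
      ((Algebra.IsIntegral.isIntegral (R := ℤ) x).map σ).tower_top
  exact ⟨(σ.toRingHom.codRestrict (algebraicClosure F E) algebraic).toIntAlgHom, rfl⟩

theorem exists_minimalPrime_notMem [IsReduced R] {z : R} (hz : z ≠ 0) :
    ∃ p ∈ minimalPrimes R, z ∉ p := by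
  by_contra! h
  refine hz (mem_nilradical.1 ?_).eq_zero
  rw [nilradical, ← Ideal.sInf_minimalPrimes]
  exact Ideal.mem_sInf.2 @h

theorem isTorsionFree_quotient_of_mem_minimalPrimes {A : Type*} [CommRing A] [IsDomain A]
    [Algebra A R] [Module.IsTorsionFree A R] {p : Ideal R} (hp : p ∈ minimalPrimes R) :
    Module.IsTorsionFree A (R ⧸ p) := by
  have : p.IsPrime := hp.1.1
  rw [Module.isTorsionFree_iff_algebraMap_injective, injective_iff_map_eq_zero]
  intro a ha
  by_contra! ha0
  refine notMem_nonZeroDivisors_of_mem_mem_minimalPrimes (Ideal.Quotient.eq_zero_iff_mem.1 ha) hp ?_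
  refine mem_nonZeroDivisors_iff_right.2 fun x hx => ?_
  rw [mul_comm, ← Algebra.smul_def] at hx
  exact (smul_eq_zero.1 hx).resolve_left ha0

theorem exists_complexEmbedding_ne_zero [Algebra.IsIntegral ℤ R] [Module.IsTorsionFree ℤ R]
    [IsReduced R] {z : R} (hz : z ≠ 0) : ∃ σ : R →ₐ[ℤ] ℂ, σ z ≠ 0 := by
  obtain ⟨p, hp, hzp⟩ := exists_minimalPrime_notMem hz
  have : p.IsPrime := hp.1.1
  have : Module.IsTorsionFree ℤ (R ⧸ p) := isTorsionFree_quotient_of_mem_minimalPrimes hp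
  let f : (R ⧸ p) →ₐ[ℤ] ℂ := IsAlgClosed.lift
  have ker_f : RingHom.ker f = ⊥ := Ideal.eq_bot_of_comap_eq_bot (R := ℤ) (by ext n; simp)
  refine ⟨f.comp (Ideal.Quotient.mkₐ ℤ p), fun h => hzp ?_⟩
  exact Ideal.Quotient.eq_zero_iff_mem.1 (ker_f.le h)

theorem half_add_log_norm_mul_le {a b : ℂ} (hab : a + b = 1) (h : a * b ≠ 0) :
    1 / 2 + Real.log ‖a * b‖ ≤ -(a * conj b).re := by
  have norm_sq_add : ‖a‖ ^ 2 + ‖b‖ ^ 2 + 2 * (a * conj b).re = 1 := by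
    rw [Complex.sq_norm, Complex.sq_norm, ← Complex.normSq_add, hab, Complex.normSq_one]
  have log_le : Real.log ‖a * b‖ ≤ ‖a‖ * ‖b‖ - 1 := by
    simpa using Real.log_le_sub_one_of_pos (norm_pos_iff.2 h)
  linarith [two_mul_le_add_sq ‖a‖ ‖b‖]

variable [Module.Finite ℤ R]

noncomputable instance fintypeComplexEmbeddings : Fintype (R →ₐ[ℤ] ℂ) := .ofFinite _

theorem one_le_prod_filter_norm (z : R) :
    1 ≤ ∏ σ : R →ₐ[ℤ] ℂ with σ z ≠ 0, ‖σ z‖ := by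
  classical
  have : Fintype (R →ₐ[ℤ] algebraicClosure ℚ ℂ) := .ofFinite _
  have : IsAlgClosure ℚ (algebraicClosure ℚ ℂ) := algebraicClosure.isAlgClosure ℚ ℂ
  have : IsGalois ℚ (algebraicClosure ℚ ℂ) := IsAlgClosure.isGalois ℚ _
  obtain ⟨m, hm⟩ := exists_intCast_eq_prod_filter_ne_zero (K := algebraicClosure ℚ ℂ) z
  have prod_eq : ∏ σ : R →ₐ[ℤ] ℂ with σ z ≠ 0, σ z = m := by
    rw [← map_intCast (algebraicClosure ℚ ℂ).val, ← hm, map_prod]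
    exact (Finset.prod_equiv (.ofBijective _ (bijective_comp_val_algebraicClosure ℚ ℂ))
      (by simp) (by simp)).symm
  have m_ne_zero : m ≠ 0 := by
    rintro rfl
    simp [Finset.prod_eq_zero_iff] at prod_eq
  rw [← norm_prod, prod_eq, Complex.norm_intCast]
  exact_mod_cast Int.one_le_abs m_ne_zero

/-- The Hermitian form `⟨x, y⟩ = ∑ σ, σ x * conj (σ y)` on `R`, where `σ` runs over the ring
homomorphisms `R → ℂ`. These are encoded as `ℤ`-algebra homomorphisms. -/
noncomputable def hermitianTrace (x y : R) : ℂ := ∑ σ : R →ₐ[ℤ] ℂ, σ x * conj (σ y)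

theorem hermitianTrace_add (x y z : R) :
    hermitianTrace x (y + z) = hermitianTrace x y + hermitianTrace x z := by
  simp [hermitianTrace, mul_add, Finset.sum_add_distrib]

theorem hermitianTrace_units_mul {u : Rˣ} (hu : IsOfFinOrder u) (x y : R) :
    hermitianTrace (u * x) (u * y) = hermitianTrace x y := by
  refine Finset.sum_congr rfl fun σ _ => ?_
  have norm_eq_one : ‖σ u‖ = 1 :=
    ((σ : R →* ℂ).isOfFinOrder (Units.isOfFinOrder_val.2 hu)).norm_eq_one
  have : σ u * conj (σ u) = 1 := by simp [Complex.mul_conj', norm_eq_one]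
  rw [map_mul, map_mul, map_mul]
  linear_combination σ x * conj (σ y) * this

theorem card_div_two_le_neg_re_hermitianTrace {x y : R} (hxy : x + y = 1) :
    (Finset.card {σ : R →ₐ[ℤ] ℂ | σ (x * y) ≠ 0} : ℝ) / 2 ≤ -(hermitianTrace x y).re := by
  calc (Finset.card {σ : R →ₐ[ℤ] ℂ | σ (x * y) ≠ 0} : ℝ) / 2
    _ ≤ Finset.card {σ : R →ₐ[ℤ] ℂ | σ (x * y) ≠ 0} / 2 +
          Real.log (∏ σ : R →ₐ[ℤ] ℂ with σ (x * y) ≠ 0, ‖σ (x * y)‖) :=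
      le_add_of_nonneg_right (Real.log_nonneg (one_le_prod_filter_norm _))
    _ = ∑ σ : R →ₐ[ℤ] ℂ with σ (x * y) ≠ 0, (1 / 2 + Real.log ‖σ (x * y)‖) := by
      rw [Real.log_prod fun σ hσ => norm_ne_zero_iff.2 (Finset.mem_filter.1 hσ).2,
        Finset.sum_add_distrib, Finset.sum_const, nsmul_eq_mul, mul_one_div]
    _ ≤ ∑ σ : R →ₐ[ℤ] ℂ with σ (x * y) ≠ 0, -(σ x * conj (σ y)).re := by
      refine Finset.sum_le_sum fun σ hσ => ?_
      rw [map_mul]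
      exact half_add_log_norm_mul_le (by rw [← map_add, hxy, map_one]) (by simpa using hσ)
    _ = ∑ σ : R →ₐ[ℤ] ℂ, -(σ x * conj (σ y)).re := by
      refine Finset.sum_subset (Finset.subset_univ _) fun σ _ hσ => ?_
      have : σ x = 0 ∨ σ y = 0 := by simpa [-not_or, or_iff_not_imp_left] using hσ
      rcases this with h | h <;> simp [h]
    _ = -(hermitianTrace x y).re := by
      rw [Finset.sum_neg_distrib, ← Complex.re_sum, hermitianTrace]

theorem finite_quotient_span_intCast {n : ℤ} (hn : n ≠ 0) :
    Finite (R ⧸ Ideal.span {(n : R)}) := by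
  refine Module.finite_of_fg_torsion _ fun x => ⟨⟨n, by simpa using hn⟩, ?_⟩
  obtain ⟨x, rfl⟩ := Ideal.Quotient.mk_surjective x
  have : Ideal.Quotient.mk (Ideal.span {(n : R)}) (n * x) = 0 :=
    Ideal.Quotient.eq_zero_iff_mem.2 (Ideal.mul_mem_right _ _ (Ideal.mem_span_singleton_self _))
  simpa using this

variable [Module.IsTorsionFree ℤ R] [IsReduced R]

theorem mul_eq_zero_of_hermitianTrace_eq_zero {x y : R} (hxy : x + y = 1)
    (h : hermitianTrace x y = 0) : x * y = 0 := by
  by_contra hne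
  obtain ⟨σ, hσ⟩ := exists_complexEmbedding_ne_zero hne
  have card_pos : 0 < Finset.card {σ : R →ₐ[ℤ] ℂ | σ (x * y) ≠ 0} :=
    Finset.card_pos.2 ⟨σ, by simpa using hσ⟩
  have card_le := card_div_two_le_neg_re_hermitianTrace hxy
  rw [h, Complex.zero_re, neg_zero] at card_le
  exact card_le.not_gt (by positivity)

theorem eq_zero_of_forall_norm_lt_one {z : R} (hz : ∀ σ : R →ₐ[ℤ] ℂ, ‖σ z‖ < 1) : z = 0 := by
  by_contra hne
  obtain ⟨σ, hσ⟩ := exists_complexEmbedding_ne_zero hne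
  refine (one_le_prod_filter_norm z).not_gt ?_
  calc ∏ σ : R →ₐ[ℤ] ℂ with σ z ≠ 0, ‖σ z‖
    _ < ∏ σ : R →ₐ[ℤ] ℂ with σ z ≠ 0, 1 :=
      Finset.prod_lt_prod_of_nonempty (fun σ hσ => by simpa using hσ) (fun σ _ => hz σ)
        ⟨σ, by simpa using hσ⟩
    _ = 1 := Finset.prod_const_one

theorem eq_of_intCast_dvd_sub {n : ℤ} (hn : 2 < n) {z w : R} (hz : IsOfFinOrder z)
    (hw : IsOfFinOrder w) (h : (n : R) ∣ z - w) : z = w := by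
  obtain ⟨x, hx⟩ := h
  have x_eq_zero : x = 0 := by
    refine eq_zero_of_forall_norm_lt_one fun σ => ?_
    have norm_eq_one {r : R} (hr : IsOfFinOrder r) : ‖σ r‖ = 1 :=
      ((σ : R →* ℂ).isOfFinOrder hr).norm_eq_one
    have two_lt : (2 : ℝ) < n := by exact_mod_cast hn
    have : n * ‖σ x‖ ≤ 2 := calc
      n * ‖σ x‖ = ‖σ z - σ w‖ := by
        rw [← map_sub, hx, map_mul, map_intCast, norm_mul, Complex.norm_intCast,
          abs_of_pos (by linarith)]
      _ ≤ ‖σ z‖ + ‖σ w‖ := norm_sub_le _ _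
      _ = 2 := by rw [norm_eq_one hz, norm_eq_one hw, one_add_one_eq_two]
    nlinarith
  rwa [x_eq_zero, mul_zero, sub_eq_zero] at hx

variable (R) in
theorem finite_torsion_units : Finite (CommGroup.torsion Rˣ) := by
  have : Finite (R ⧸ Ideal.span {((3 : ℤ) : R)}) := finite_quotient_span_intCast three_ne_zero
  refine .of_injective
    (fun ζ : CommGroup.torsion Rˣ => Ideal.Quotient.mk (.span {((3 : ℤ) : R)}) ((ζ : Rˣ) : R))
    fun ζ ξ h => ?_
  rw [Ideal.Quotient.eq, Ideal.mem_span_singleton] at h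
  exact Subtype.ext <| Units.ext <| eq_of_intCast_dvd_sub (by norm_num)
    (Units.isOfFinOrder_val.2 ζ.2) (Units.isOfFinOrder_val.2 ξ.2) h

end ComplexEmbeddings

theorem isInternal_of_iSupIndep_of_iSup_eq_top {ι M : Type*} [DecidableEq ι] [AddCommGroup M]
    {A : ι → AddSubgroup M} (hind : iSupIndep A) (htop : ⨆ i, A i = ⊤) :
    DirectSum.IsInternal A := by
  refine ⟨hind.dfinsuppSumAddHom_injective, AddMonoidHom.range_eq_top.1 (eq_top_iff.2 ?_)⟩
  exact htop.ge.trans <| iSup_le fun i x hx =>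
    ⟨.of (fun i => A i) i ⟨x, hx⟩, DirectSum.coeAddMonoidHom_of A i ⟨x, hx⟩⟩

namespace Grading

open DirectSum

variable {R : Type*} [CommRing R] {Γ : Type*} [CommGroup Γ]

section Components

variable (g : Grading R Γ)

open Classical in
noncomputable instance : Decomposition g.comp := g.isInternal.chooseDecomposition

theorem iSupIndep_comp : iSupIndep g.comp := by
  classical exact g.isInternal.addSubgroup_iSupIndep

theorem iSup_comp : ⨆ γ, g.comp γ = ⊤ := by
  classical
  exact eq_top_iff.2 fun x _ => Decomposition.inductionOn g.comp (zero_mem _)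
    (fun {γ} x => AddSubgroup.mem_iSup_of_mem γ x.2) (fun _ _ => add_mem) x

theorem addMonoidHom_ext {M : Type*} [AddZeroClass M] {φ ψ : R →+ M}
    (h : ∀ γ, ∀ x ∈ g.comp γ, φ x = ψ x) : φ = ψ := by
  classical
  ext x
  exact Decomposition.inductionOn g.comp (by simp) (fun x => h _ x x.2)
    (fun x y hx hy => by rw [map_add, map_add, hx, hy]) x

theorem algHom_ext {A : Type*} [Ring A] {σ τ : R →ₐ[ℤ] A}
    (h : ∀ γ, ∀ x ∈ g.comp γ, σ x = τ x) : σ = τ :=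
  AlgHom.ext fun x =>
    DFunLike.congr_fun (g.addMonoidHom_ext (φ := (σ : R →+ A)) (ψ := (τ : R →+ A)) h) x

open Classical in
/-- The projection of `R` onto the homogeneous component of degree `γ`. -/
noncomputable def proj (γ : Γ) : R →+ R :=
  (g.comp γ).subtype.comp <|
    (DFinsupp.evalAddMonoidHom γ).comp (decomposeAddEquiv g.comp).toAddMonoidHom

theorem proj_mem (γ : Γ) (x : R) : g.proj γ x ∈ g.comp γ :=
  SetLike.coe_mem _

theorem exists_proj_ne_zero {x : R} (hx : x ≠ 0) : ∃ γ, g.proj γ x ≠ 0 := by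
  classical
  contrapose! hx
  refine (decomposeAddEquiv g.comp).map_eq_zero_iff.1 ?_
  exact DFinsupp.ext fun γ => Subtype.ext (hx γ)

variable {g}

theorem proj_of_mem {γ : Γ} {x : R} (hx : x ∈ g.comp γ) : g.proj γ x = x := by
  classical exact decompose_of_mem_same g.comp hx

theorem proj_of_mem_of_ne {γ δ : Γ} {x : R} (hx : x ∈ g.comp γ) (h : γ ≠ δ) : g.proj δ x = 0 := by
  classical exact decompose_of_mem_ne g.comp hx h

theorem eq_of_mem_of_mem {γ δ : Γ} {x : R} (hx : x ≠ 0) (hγ : x ∈ g.comp γ)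
    (hδ : x ∈ g.comp δ) : γ = δ := by
  by_contra h
  exact hx ((proj_of_mem hδ).symm.trans (proj_of_mem_of_ne hγ h))

variable (g) in
theorem one_mem : (1 : R) ∈ g.comp 1 := by
  have proj_mul {γ : Γ} {x : R} (hx : x ∈ g.comp γ) :
      (g.proj γ).comp (.mulRight x) = (AddMonoidHom.mulRight x).comp (g.proj 1) := by
    refine g.addMonoidHom_ext fun δ y hy => ?_
    have hyx := g.mul_mem hy hx
    obtain rfl | hδ := eq_or_ne δ 1
    · rw [one_mul] at hyx
      simp [proj_of_mem hyx, proj_of_mem hy]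
    · simp [proj_of_mem_of_ne hyx (mul_ne_right.2 hδ), proj_of_mem_of_ne hy hδ]
  have mulLeft_eq_id : AddMonoidHom.mulLeft (g.proj 1 1) = .id R :=
    g.addMonoidHom_ext fun γ x hx => by
      simpa [proj_of_mem hx] using (DFunLike.congr_fun (proj_mul hx) 1).symm
  have proj_one : g.proj 1 1 = 1 := by simpa using DFunLike.congr_fun mulLeft_eq_id 1
  exact proj_one ▸ g.proj_mem 1 1

theorem pow_mem {γ : Γ} {x : R} (hx : x ∈ g.comp γ) (n : ℕ) : x ^ n ∈ g.comp (γ ^ n) := by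
  induction n with
  | zero => simpa using g.one_mem
  | succ n ih => simpa only [pow_succ] using g.mul_mem ih hx

end Components

section Support

/-- The set of degrees whose homogeneous component is non-zero. -/
def support (g : Grading R Γ) : Set Γ := {γ | g.comp γ ≠ ⊥}

variable {g : Grading R Γ}

theorem mem_support_of_mem {γ : Γ} {x : R} (hx : x ∈ g.comp γ) (h : x ≠ 0) : γ ∈ g.support :=
  fun hγ => h (by simpa [hγ] using hx)

theorem finite_support (g : Grading R Γ) [IsNoetherian ℤ R] : g.support.Finite := by
  have hind := (iSupIndep_map_orderIso_iff AddSubgroup.toIntSubmodule).2 g.iSupIndep_comp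
  exact (WellFoundedGT.finite_ne_bot_of_iSupIndep hind).subset (by simp [support])

theorem isOfFinOrder_of_mem_support [IsNoetherian ℤ R] [IsReduced R] {γ : Γ}
    (hγ : γ ∈ g.support) : IsOfFinOrder γ := by
  obtain ⟨x, hx, hx0⟩ := (g.comp γ).bot_or_exists_ne_zero.resolve_left hγ
  refine finite_powers.1 (g.finite_support.subset ?_)
  rintro _ ⟨n, rfl⟩
  exact mem_support_of_mem (pow_mem hx n) (pow_ne_zero n hx0)

theorem finite_closure_support (g : Grading R Γ) [IsNoetherian ℤ R] [IsReduced R] :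
    Finite (Subgroup.closure g.support) := by
  have := g.finite_support.to_subtype
  have : Group.FG (Subgroup.closure g.support) := Group.closure_finite_fg _
  have closure_le : Subgroup.closure g.support ≤ CommGroup.torsion Γ :=
    (Subgroup.closure_le _).2 fun _ => isOfFinOrder_of_mem_support
  exact CommGroup.finite_of_fg_isMulTorsion _ fun γ => Submonoid.isOfFinOrder_coe.1 (closure_le γ.2)

/-- A grading supported on a subgroup `H`, regarded as a grading by `H`. -/
def restrict (g : Grading R Γ) (H : Subgroup Γ) (hH : g.support ⊆ H) : Grading R H where
  comp γ := g.comp γ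
  mul_mem _ _ _ _ hx hy := g.mul_mem hx hy
  isInternal := by
    let := Classical.decEq H
    refine isInternal_of_iSupIndep_of_iSup_eq_top (g.iSupIndep_comp.comp Subtype.val_injective) ?_
    refine eq_top_iff.2 (g.iSup_comp.ge.trans (iSup_le fun γ => ?_))
    by_cases hγ : g.comp γ = ⊥
    · exact hγ ▸ bot_le
    · exact le_iSup (fun γ : H => g.comp γ) ⟨γ, hH hγ⟩

end Support

section Universal

open Classical in
/-- The grading of `R` by `E` that is concentrated in degree `1`. -/
noncomputable def trivial (R E : Type*) [CommRing R] [CommGroup E] : Grading R E where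
  comp ε := if ε = 1 then ⊤ else ⊥
  mul_mem γ δ x y hx hy := by split_ifs at * <;> simp_all
  isInternal := by
    let := Classical.decEq E
    refine isInternal_of_iSupIndep_of_iSup_eq_top (fun ε => ?_) ?_
    · obtain rfl | hε := eq_or_ne ε 1
      · simp +contextual
      · simp [hε]
    · exact eq_top_iff.2 (le_iSup_of_le 1 (by simp))

variable {g : Grading R Γ}

theorem trivial_comp_eq_iSup {E : Type*} [CommGroup E] {f : Γ →* E}
    (hf : ∀ γ ∈ g.support, f γ = 1) (ε : E) :
    (trivial R E).comp ε = ⨆ γ ∈ f ⁻¹' {ε}, g.comp γ := by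
  obtain rfl | hε := eq_or_ne ε 1
  · have top_le : ⊤ ≤ ⨆ γ ∈ f ⁻¹' {1}, g.comp γ := by
      refine g.iSup_comp.ge.trans (iSup_le fun γ => ?_)
      by_cases hγ : g.comp γ = ⊥
      · exact hγ ▸ bot_le
      · exact le_iSup₂_of_le γ (hf γ hγ) le_rfl
    rw [eq_top_iff.2 top_le]
    simp [trivial]
  · have comp_eq_bot (γ : Γ) (hγ : f γ = ε) : g.comp γ = ⊥ := by
      by_contra h
      exact hε (hγ.symm.trans (hf γ h))
    simpa [trivial, hε, eq_comm (a := ⊥)] using comp_eq_bot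

-- Both the quotient map and the trivial homomorphism to `Γ ⧸ closure g.support` push `g` forward to
-- the trivial grading.
theorem IsUniversal.closure_support (hg : g.IsUniversal) : Subgroup.closure g.support = ⊤ := by
  set H := Subgroup.closure g.support
  have mk_eq_one : QuotientGroup.mk' H = 1 := (hg (Γ ⧸ H) _ (trivial R (Γ ⧸ H))).unique
    (trivial_comp_eq_iSup fun γ hγ => (QuotientGroup.eq_one_iff γ).2 (Subgroup.subset_closure hγ))
    (trivial_comp_eq_iSup fun γ _ => MonoidHom.one_apply γ)
  rw [← QuotientGroup.ker_mk' H, mk_eq_one, MonoidHom.ker_one]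

end Universal

section Twist

variable (g : Grading R Γ) {A : Type*} [CommRing A]

open Classical in
/-- The twist of a ring homomorphism `σ` by a character `χ` of the grading group: the ring
homomorphism that is `χ γ • σ` on the component of degree `γ`. -/
noncomputable def twist (χ : Γ →* Aˣ) (σ : R →ₐ[ℤ] A) : R →ₐ[ℤ] A :=
  let φ : R →+ A := (toAddMonoid fun γ =>
    ((AddMonoidHom.mulLeft (χ γ : A)).comp (σ : R →+ A)).comp (g.comp γ).subtype).comp
      (decomposeAddEquiv g.comp).toAddMonoidHom
  have φ_apply {γ : Γ} {x : R} (hx : x ∈ g.comp γ) : φ x = χ γ * σ x := by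
    lift x to g.comp γ using hx
    simp [φ]
  have φ_mul (x y : R) : φ (x * y) = φ x * φ y := by
    suffices AddMonoidHom.mul.compr₂ φ = (AddMonoidHom.mul.comp φ).compl₂ φ from
      DFunLike.congr_fun (DFunLike.congr_fun this x) y
    refine g.addMonoidHom_ext fun γ x hx => g.addMonoidHom_ext fun δ y hy => ?_
    simp [φ_apply (g.mul_mem hx hy), φ_apply hx, φ_apply hy, mul_mul_mul_comm]
  RingHom.toIntAlgHom { φ with
    map_one' := by simpa using φ_apply g.one_mem
    map_mul' := φ_mul }

variable {g}

theorem twist_apply {χ : Γ →* Aˣ} {σ : R →ₐ[ℤ] A} {γ : Γ} {x : R} (hx : x ∈ g.comp γ) :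
    g.twist χ σ x = χ γ * σ x := by
  classical
  lift x to g.comp γ using hx
  simp [twist]

variable (g) in
theorem twist_injective (χ : Γ →* Aˣ) : Function.Injective (g.twist χ) := fun σ τ h =>
  g.algHom_ext fun γ x hx => (χ γ).isUnit.mul_left_cancel <| by
    rw [← twist_apply hx, h, twist_apply hx]

end Twist

section Orthogonality

open ComplexConjugate

variable {g : Grading R Γ} [Finite Γ] [Module.Finite ℤ R]

theorem hermitianTrace_eq_zero_of_mem_of_ne {γ δ : Γ} {x y : R} (hx : x ∈ g.comp γ)
    (hy : y ∈ g.comp δ) (h : γ ≠ δ) : hermitianTrace x y = 0 := by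
  have : NeZero (Monoid.exponent Γ) := ⟨Monoid.exponent_ne_zero_of_finite⟩
  obtain ⟨χ, hχ⟩ := CommGroup.exists_apply_ne_one_of_hasEnoughRootsOfUnity Γ ℂ
    (mt mul_inv_eq_one.1 h)
  have conj_χ : conj (χ δ : ℂ) = (χ δ⁻¹ : ℂˣ) := by
    have norm_eq_one : ‖(χ δ : ℂ)‖ = 1 :=
      (Units.isOfFinOrder_val.2 (χ.isOfFinOrder (isOfFinOrder_of_finite δ))).norm_eq_one
    rw [← Complex.inv_eq_conj norm_eq_one, map_inv, Units.val_inv_eq_inv_val]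
  have twist_eq : hermitianTrace x y = χ (γ * δ⁻¹) * hermitianTrace x y := calc
    hermitianTrace x y = ∑ σ, g.twist χ σ x * conj (g.twist χ σ y) :=
      ((Finite.injective_iff_bijective.1 (g.twist_injective χ)).sum_comp
        fun σ => σ x * conj (σ y)).symm
    _ = ∑ σ : R →ₐ[ℤ] ℂ, χ (γ * δ⁻¹) * (σ x * conj (σ y)) := by
      refine Finset.sum_congr rfl fun σ _ => ?_
      rw [twist_apply hx, twist_apply hy, map_mul conj, conj_χ, map_mul χ, Units.val_mul]
      ring
    _ = χ (γ * δ⁻¹) * hermitianTrace x y := (Finset.mul_sum _ _ _).symm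
  by_contra trace_ne_zero
  exact hχ (Units.ext ((right_eq_mul₀ trace_ne_zero).1 twist_eq))

theorem hermitianTrace_sub_proj_eq_zero {γ : Γ} {x : R} (hx : x ∈ g.comp γ) (w : R) :
    hermitianTrace x (w - g.proj γ w) = 0 := by
  let φ : R →+ ℂ := AddMonoidHom.mk' (hermitianTrace x) (hermitianTrace_add x)
  suffices φ.comp (.id R - g.proj γ) = 0 from DFunLike.congr_fun this w
  refine g.addMonoidHom_ext fun δ y hy => ?_
  obtain rfl | hδ := eq_or_ne δ γ
  · simp [proj_of_mem hy]
  · have φ_y : φ y = 0 := hermitianTrace_eq_zero_of_mem_of_ne hx hy hδ.symm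
    simp [proj_of_mem_of_ne hy hδ, φ_y]

variable [Module.IsTorsionFree ℤ R] [IsReduced R]

theorem isIdempotentElem_inv_mul_proj {u : Rˣ} (hu : IsOfFinOrder u) (γ : Γ) :
    IsIdempotentElem (↑u⁻¹ * g.proj γ u) := by
  have add_eq_one : ↑u⁻¹ * g.proj γ u + ↑u⁻¹ * (u - g.proj γ u) = 1 := by
    rw [← mul_add, add_sub_cancel, Units.inv_mul]
  refine (IsIdempotentElem.of_mul_add
    (mul_eq_zero_of_hermitianTrace_eq_zero add_eq_one ?_) add_eq_one).1
  rw [hermitianTrace_units_mul hu.inv]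
  exact hermitianTrace_sub_proj_eq_zero (g.proj_mem γ u) u

theorem exists_mem_comp_of_isOfFinOrder (hconn : IsConnectedRing R) (g : Grading R Γ) {u : Rˣ}
    (hu : IsOfFinOrder u) : ∃ γ, (u : R) ∈ g.comp γ := by
  have := hconn.1
  obtain ⟨γ, hγ⟩ := g.exists_proj_ne_zero u.ne_zero
  have inv_mul_proj_ne_zero : ↑u⁻¹ * g.proj γ u ≠ 0 := by simpa using hγ
  have inv_mul_proj : ↑u⁻¹ * g.proj γ u = 1 :=
    (hconn.2 _ (isIdempotentElem_inv_mul_proj hu γ)).resolve_left inv_mul_proj_ne_zero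
  have proj_eq : g.proj γ u = u := by simpa using (Units.inv_mul_eq_iff_eq_mul u).1 inv_mul_proj
  exact ⟨γ, proj_eq ▸ g.proj_mem γ u⟩

end Orthogonality

end Grading

theorem degree_map_exists_general
    {R : Type*} [CommRing R] [Module.IsTorsionFree ℤ R] [Module.Finite ℤ R] [IsReduced R]
    (hconn : IsConnectedRing R) {Γ : Type*} [CommGroup Γ] (gr : Grading R Γ) :
    Finite (CommGroup.torsion Rˣ) ∧ Finite (Subgroup.closure gr.support) ∧
    (∀ ζ : CommGroup.torsion Rˣ, ∃! γ : Γ, ((ζ : Rˣ) : R) ∈ gr.comp γ) ∧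
    ∃ d : CommGroup.torsion Rˣ →* Γ,
      ∀ ζ : CommGroup.torsion Rˣ, ((ζ : Rˣ) : R) ∈ gr.comp (d ζ) := by
  have := hconn.1
  have finite_closure := gr.finite_closure_support
  let gr' := gr.restrict _ Subgroup.subset_closure
  have exists_degree (ζ : CommGroup.torsion Rˣ) : ∃ γ, ((ζ : Rˣ) : R) ∈ gr.comp γ :=
    have ⟨γ, hγ⟩ := gr'.exists_mem_comp_of_isOfFinOrder hconn ζ.2
    ⟨γ, hγ⟩
  have degree_unique (ζ : CommGroup.torsion Rˣ) {γ δ : Γ} (hγ : ((ζ : Rˣ) : R) ∈ gr.comp γ)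
      (hδ : ((ζ : Rˣ) : R) ∈ gr.comp δ) : γ = δ :=
    Grading.eq_of_mem_of_mem (Units.ne_zero _) hγ hδ
  choose d hd using exists_degree
  refine ⟨finite_torsion_units R, finite_closure,
    fun ζ => ⟨d ζ, hd ζ, fun γ hγ => degree_unique ζ hγ (hd ζ)⟩,
    .mk' d fun ζ ξ => degree_unique (ζ * ξ) (hd (ζ * ξ)) ?_, hd⟩
  simpa using gr.mul_mem (hd ζ) (hd ξ)

/-- Let `R` be a connected reduced order with universal grading
`(Γ, (R_γ))`. Then `μ(R)` and `Γ` are finite, every root of unity of `R` lies in a unique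
component `R_γ`, and sending each root of unity to the component containing it defines
a group homomorphism `d : μ(R) → Γ` (the degree map). -/
theorem degree_map_exists
    {R : Type u} [CommRing R] [Module.Free ℤ R] [Module.Finite ℤ R] [IsReduced R]
    (hconn : IsConnectedRing R)
    {Γ : Type v} [CommGroup Γ] (gr : Grading R Γ) (hgr : gr.IsUniversal) :
    Finite (CommGroup.torsion Rˣ) ∧ Finite Γ ∧
    (∀ ζ : CommGroup.torsion Rˣ, ∃! γ : Γ, ((ζ : Rˣ) : R) ∈ gr.comp γ) ∧
    ∃ d : CommGroup.torsion Rˣ →* Γ,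
      ∀ ζ : CommGroup.torsion Rˣ, ((ζ : Rˣ) : R) ∈ gr.comp (d ζ) := by
  obtain ⟨finite_torsion, finite_closure, degree⟩ := degree_map_exists_general hconn gr
  rw [hgr.closure_support] at finite_closure
  exact ⟨finite_torsion, .of_equiv _ Subgroup.topEquiv.toEquiv, degree⟩
end
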